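/- arXiv:1903.08396 — 11 statements merged into one kernel-verified Lean document; each statement's English description precedes it below -/
import Mathlib

section
/- Let V be a finite-dimensional complex vector space of dimension r and let f : V → V be a linear endomorphism whose minimal polynomial has degree r. Then there exist a linear isomorphism θ : V* → V and a linear map κ : V → V* such that f = θ ∘ κ, θ is symmetric, and κ is symmetric. -/
open Polynomial in
theorem aux_cyclic
    (V : Type*) [AddCommGroup V] [Module ℂ V] [FiniteDimensional ℂ V]
    (f : Module.End ℂ V) :
    ∃ v0 : V, ∀ p : ℂ[X], aeval f p v0 = 0 → minpoly ℂ f ∣ p := by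
  obtain ⟨x, hx⟩ := Module.exists_ker_toSpanSingleton_eq_annihilator ℂ[X] (Module.AEval' f)
  obtain ⟨x, rfl⟩ := (Module.AEval'.of f).surjective x
  refine ⟨x, fun p hp => ?_⟩
  rw [← span_minpoly_eq_annihilator] at hx
  rw [← Ideal.mem_span_singleton, ← hx, LinearMap.mem_ker, LinearMap.toSpanSingleton_apply,
    ← Module.AEval.of_aeval_smul, Module.End.smul_def, hp, map_zero]

open Polynomial in
theorem aux_form
    (V : Type*) [AddCommGroup V] [Module ℂ V] [FiniteDimensional ℂ V]
    (f : Module.End ℂ V)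
    (hf : (minpoly ℂ f).natDegree = Module.finrank ℂ V) :
    ∃ B : V →ₗ[ℂ] Module.Dual ℂ V, Function.Injective B ∧ (∀ v w, B v w = B w v) ∧
      ∀ v w, B (f v) w = B v (f w) := by
  obtain ⟨v0, h0⟩ := aux_cyclic V f
  set r := Module.finrank ℂ V with hr
  have hm0 : minpoly ℂ f ≠ 0 := minpoly.ne_zero (Algebra.IsIntegral.isIntegral f)
  let T : degreeLT ℂ r →ₗ[ℂ] V :=
    (LinearMap.applyₗ v0) ∘ₗ (aeval f).toLinearMap ∘ₗ (degreeLT ℂ r).subtype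
  have hT : ∀ p, T p = aeval f (p : ℂ[X]) v0 := fun p => rfl
  have hinj : Function.Injective T := by
    rw [injective_iff_map_eq_zero]
    rintro ⟨p, hp⟩ h
    have hd := h0 p h
    rw [mem_degreeLT] at hp
    have : p = 0 := by
      apply eq_zero_of_dvd_of_degree_lt hd
      rwa [degree_eq_natDegree hm0, hf]
    simpa using this
  have hfd : FiniteDimensional ℂ (degreeLT ℂ r) :=
    Module.Finite.equiv (degreeLTEquiv ℂ r).symm
  have hdim : Module.finrank ℂ (degreeLT ℂ r) = Module.finrank ℂ V := by
    rw [(degreeLTEquiv ℂ r).finrank_eq]; simp [hr]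
  let e := LinearEquiv.ofInjectiveOfFinrankEq T hinj hdim
  have he : ∀ p, e p = aeval f (p : ℂ[X]) v0 := fun p => rfl
  let l : V →ₗ[ℂ] ℂ := lcoeff ℂ (r - 1) ∘ₗ (degreeLT ℂ r).subtype ∘ₗ e.symm.toLinearMap
  have hl : ∀ p : ℂ[X], p ∈ degreeLT ℂ r → l (aeval f p v0) = p.coeff (r - 1) := by
    intro p hp
    have : e.symm (aeval f p v0) = ⟨p, hp⟩ := by
      rw [LinearEquiv.symm_apply_eq, he]
    simp [l, this]
  let s : V →ₗ[ℂ] ℂ[X] := (degreeLT ℂ r).subtype ∘ₗ e.symm.toLinearMap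
  have hs : ∀ v, aeval f (s v) v0 = v := fun v => e.apply_symm_apply v
  have hsm : ∀ v, s v ∈ degreeLT ℂ r := fun v => (e.symm v).2
  have hc : ∀ (p q : ℂ[X]) v, aeval f p (aeval f q v) = aeval f q (aeval f p v) := by
    intro p q v
    rw [← Module.End.mul_apply, ← Module.End.mul_apply, ← map_mul, ← map_mul, mul_comm]
  have hcf : ∀ (p : ℂ[X]) v, aeval f p (f v) = f (aeval f p v) := by
    intro p v
    simpa using hc p X v
  let B : V →ₗ[ℂ] Module.Dual ℂ V :=
    (LinearMap.compRight ℂ l) ∘ₗ (aeval f).toLinearMap ∘ₗ s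
  have hB : ∀ v w, B v w = l (aeval f (s v) w) := fun v w => rfl
  have hsym : ∀ v w, B v w = B w v := by
    intro v w
    rw [hB, hB]
    conv_lhs => rw [← hs w, hc, hs]
  refine ⟨B, ?_, hsym, ?_⟩
  · rw [injective_iff_map_eq_zero]
    intro v hv
    by_contra hne
    have hsv : s v ≠ 0 := by
      intro h
      apply hne
      rw [← hs v, h]; simp
    have hlt : (s v).natDegree < r := by
      have := hsm v
      rwa [mem_degreeLT, ← natDegree_lt_iff_degree_lt hsv] at this
    have hmul : s v * X ^ (r - 1 - (s v).natDegree) ∈ degreeLT ℂ r := by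
      rw [mem_degreeLT, ← natDegree_lt_iff_degree_lt (mul_ne_zero hsv (pow_ne_zero _ X_ne_zero)),
        natDegree_mul_X_pow _ hsv]
      omega
    have h1 := hl _ hmul
    have h2 : B v (aeval f (X ^ (r - 1 - (s v).natDegree) : ℂ[X]) v0) = 0 := by
      rw [hv]; rfl
    rw [hB, ← Module.End.mul_apply, ← map_mul, h1, coeff_mul_X_pow', if_pos (by omega)] at h2
    have h3 : r - 1 - (r - 1 - (s v).natDegree) = (s v).natDegree := by omega
    rw [h3] at h2
    exact hsv (leadingCoeff_eq_zero.mp h2)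
  · intro v w
    rw [hsym, hB, hB, hcf, ← hcf]
    conv_lhs => rw [← hs v, hcf, hc, hs]
    rw [hcf]

/-- Let `V` be a finite-dimensional complex vector space of dimension `r`
and let `f : V → V` be a linear endomorphism whose minimal polynomial has degree `r`.
Then there exist a linear isomorphism `θ : V* → V` and a linear map `κ : V → V*`
such that `f = θ ∘ κ`, `θ` is symmetric and `κ` is symmetric. -/
theorem factorization_exists
    (V : Type*) [AddCommGroup V] [Module ℂ V] [FiniteDimensional ℂ V]
    (f : Module.End ℂ V)
    (hf : (minpoly ℂ f).natDegree = Module.finrank ℂ V) :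
    ∃ (θ : Module.Dual ℂ V →ₗ[ℂ] V) (κ : V →ₗ[ℂ] Module.Dual ℂ V),
      Function.Bijective θ ∧
      f = θ ∘ₗ κ ∧
      (∀ φ ψ : Module.Dual ℂ V, ψ (θ φ) = φ (θ ψ)) ∧
      (∀ v w : V, κ v w = κ w v) := by
  obtain ⟨B, hinj, hsym, hBf⟩ := aux_form V f hf
  let e := LinearEquiv.ofInjectiveOfFinrankEq B hinj Subspace.dual_finrank_eq.symm
  have he : ∀ v, e v = B v := fun v => rfl
  refine ⟨e.symm.toLinearMap, B ∘ₗ f, e.symm.bijective, ?_, ?_, ?_⟩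
  · ext v
    simp [← he]
  · intro φ ψ
    obtain ⟨v, rfl⟩ := e.surjective φ
    obtain ⟨w, rfl⟩ := e.surjective ψ
    simp only [LinearEquiv.coe_coe, LinearEquiv.symm_apply_apply]
    rw [he, he, hsym w v]
  · intro v w
    simp [hBf v w, hsym v]
end

section
/- Let V be a finite-dimensional complex vector space of dimension r and let f : V → V be a linear endomorphism whose minimal polynomial has degree r. Suppose θ₁, θ₂ : V* → V are symmetric linear isomorphisms and κ₁, κ₂ : V → V* are symmetric linear maps with f = θ₁ ∘ κ₁ = θ₂ ∘ κ₂. Then there exists a polynomial P ∈ ℂ[T] such that P(f) is invertible, θ₂ = θ₁ ∘ ᵗ(P(f)), and κ₁ = ᵗ(P(f)) ∘ κ₂. -/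
open Polynomial in
theorem exists_cyclic_vec {V : Type*} [AddCommGroup V] [Module ℂ V] [FiniteDimensional ℂ V]
    (f : Module.End ℂ V) (hf : (minpoly ℂ f).natDegree = Module.finrank ℂ V) :
    ∃ x : V, ∀ y : V, ∃ P : ℂ[X], aeval f P x = y := by
  obtain ⟨x', hx⟩ := Module.exists_ker_toSpanSingleton_eq_annihilator ℂ[X] (Module.AEval' f)
  obtain ⟨x, rfl⟩ := (Module.AEval'.of f).surjective x'
  rw [← span_minpoly_eq_annihilator] at hx
  refine ⟨x, ?_⟩
  have key : ∀ q : ℂ[X], aeval f q x = 0 → minpoly ℂ f ∣ q := by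
    intro q hq
    rw [← Ideal.mem_span_singleton, ← hx, LinearMap.mem_ker, LinearMap.toSpanSingleton_apply]
    exact hq
  let L : degreeLT ℂ (Module.finrank ℂ V) →ₗ[ℂ] V :=
    (LinearMap.applyₗ x) ∘ₗ (aeval f).toLinearMap ∘ₗ (degreeLT ℂ (Module.finrank ℂ V)).subtype
  have hL : ∀ q, L q = aeval f (q : ℂ[X]) x := fun q => rfl
  have hinj : Function.Injective L := by
    rw [injective_iff_map_eq_zero]
    intro q hq
    have hd := key _ hq
    have hq2 := mem_degreeLT.1 q.2
    apply Subtype.ext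
    apply eq_zero_of_dvd_of_degree_lt hd
    rw [degree_eq_natDegree (minpoly.ne_zero_of_finite ℂ f), hf]
    exact hq2
  have hfin : Module.finrank ℂ (degreeLT ℂ (Module.finrank ℂ V)) = Module.finrank ℂ V := by
    rw [(degreeLTEquiv ℂ _).finrank_eq]; simp
  have : FiniteDimensional ℂ (degreeLT ℂ (Module.finrank ℂ V)) :=
    (degreeLTEquiv ℂ (Module.finrank ℂ V)).symm.finiteDimensional
  have hs := (LinearMap.injective_iff_surjective_of_finrank_eq_finrank hfin).1 hinj
  intro y
  obtain ⟨q, hq⟩ := hs y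
  exact ⟨q, hq⟩

/-- Let `V` be a finite-dimensional complex vector space of dimension `r`
and `f : V → V` a linear endomorphism whose minimal polynomial has degree `r`.
Suppose `θ₁, θ₂ : V* → V` are symmetric linear isomorphisms and `κ₁, κ₂ : V → V*` are
symmetric linear maps with `f = θ₁ ∘ κ₁ = θ₂ ∘ κ₂`.  Then there exists a polynomial
`P ∈ ℂ[T]` such that `P(f)` is invertible, `θ₂ = θ₁ ∘ ᵗ(P(f))` and `κ₁ = ᵗ(P(f)) ∘ κ₂`. -/
theorem factorization_unique
    (V : Type*) [AddCommGroup V] [Module ℂ V] [FiniteDimensional ℂ V]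
    (f : Module.End ℂ V)
    (hf : (minpoly ℂ f).natDegree = Module.finrank ℂ V)
    (θ₁ θ₂ : Module.Dual ℂ V →ₗ[ℂ] V) (κ₁ κ₂ : V →ₗ[ℂ] Module.Dual ℂ V)
    (hθ₁bij : Function.Bijective θ₁) (hθ₂bij : Function.Bijective θ₂)
    (hθ₁sym : ∀ φ ψ : Module.Dual ℂ V, ψ (θ₁ φ) = φ (θ₁ ψ))
    (hθ₂sym : ∀ φ ψ : Module.Dual ℂ V, ψ (θ₂ φ) = φ (θ₂ ψ))
    (hκ₁sym : ∀ v w : V, κ₁ v w = κ₁ w v)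
    (hκ₂sym : ∀ v w : V, κ₂ v w = κ₂ w v)
    (h₁ : f = θ₁ ∘ₗ κ₁) (h₂ : f = θ₂ ∘ₗ κ₂) :
    ∃ P : Polynomial ℂ,
      Function.Bijective ⇑(Polynomial.aeval f P) ∧
      θ₂ = θ₁ ∘ₗ LinearMap.dualMap (Polynomial.aeval f P) ∧
      κ₁ = LinearMap.dualMap (Polynomial.aeval f P) ∘ₗ κ₂ := by
  obtain ⟨x, hx⟩ := exists_cyclic_vec f hf
  let e := LinearEquiv.ofBijective θ₁ hθ₁bij
  have he : ∀ φ, e φ = θ₁ φ := fun φ => rfl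
  have a₁ : ∀ v, f v = θ₁ (κ₁ v) := fun v => by rw [h₁]; rfl
  have a₂ : ∀ v, f v = θ₂ (κ₂ v) := fun v => by rw [h₂]; rfl
  have b₁ : ∀ φ : Module.Dual ℂ V, f (θ₁ φ) = θ₁ (φ ∘ₗ f) := by
    intro φ
    rw [a₁]; congr 1; ext w
    rw [hκ₁sym, LinearMap.comp_apply, a₁, hθ₁sym]
  have b₂ : ∀ φ : Module.Dual ℂ V, f (θ₂ φ) = θ₂ (φ ∘ₗ f) := by
    intro φ
    rw [a₂]; congr 1; ext w
    rw [hκ₂sym, LinearMap.comp_apply, a₂, hθ₂sym]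
  let g : Module.End ℂ V := θ₂ ∘ₗ e.symm.toLinearMap
  have hg : ∀ φ, g (θ₁ φ) = θ₂ φ := fun φ => by
    rw [← he]; simp [g]
  have hcomm : Commute f g := by
    ext v
    obtain ⟨φ, rfl⟩ := hθ₁bij.2 v
    simp only [Module.End.mul_apply]
    rw [hg, b₁, hg, b₂]
  obtain ⟨P, hP⟩ := hx (g x)
  have hgP : g = Polynomial.aeval f P := by
    ext y
    obtain ⟨Q, rfl⟩ := hx y
    have c1 : Commute (Polynomial.aeval f Q) g :=
      by
      induction Q using Polynomial.induction_on' with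
      | add p q hp hq => rw [map_add]; exact hp.add_left hq
      | monomial n a =>
        rw [Polynomial.aeval_monomial]
        exact (Algebra.commute_algebraMap_left a g).mul_left (hcomm.pow_left n)
    have c2 : Commute (Polynomial.aeval f Q) (Polynomial.aeval f P) :=
      by
      rw [Commute, SemiconjBy, ← map_mul, ← map_mul, mul_comm]
    have d1 := LinearMap.congr_fun c1.eq x
    have d2 := LinearMap.congr_fun c2.eq x
    simp only [Module.End.mul_apply] at d1 d2
    rw [← d1, ← d2, hP]
  have hT : θ₂ = θ₁ ∘ₗ LinearMap.dualMap (Polynomial.aeval f P) := by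
    rw [← hgP]
    apply LinearMap.ext
    intro φ
    rw [← sub_eq_zero, ← Module.forall_dual_apply_eq_zero_iff ℂ]
    intro ψ
    rw [map_sub, sub_eq_zero, hθ₂sym, LinearMap.comp_apply, hθ₁sym, LinearMap.dualMap_apply, hg]
  refine ⟨P, ?_, hT, ?_⟩
  · rw [← hgP]
    exact hθ₂bij.comp e.symm.bijective
  · refine LinearMap.ext fun v => ?_
    apply hθ₁bij.1
    rw [← a₁, a₂, hT]
    rfl
end

section
/- Let V be a finite-dimensional complex vector space of dimension r and let f : V → V be a linear endomorphism whose minimal polynomial has degree r. Then a linear endomorphism g : V → V satisfies f ∘ g = g ∘ f if and only if there exists a polynomial P ∈ ℂ[T] with g = P(f); that is, the kernel of the adjoint map ad(f) : g ↦ f∘g − g∘f equals the subalgebra of polynomials in f. -/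
open Polynomial in
theorem aux_sep
    (V : Type*) [AddCommGroup V] [Module ℂ V] [FiniteDimensional ℂ V]
    (f : Module.End ℂ V) :
    ∃ v : V, ∀ p : ℂ[X], aeval f p v = 0 → aeval f p = 0 := by
  classical
  set m := minpoly ℂ f with hm
  have hm0 : m ≠ 0 := minpoly.ne_zero (Algebra.IsIntegral.isIntegral f)
  let q : Multiset ℂ → ℂ[X] := fun s => (s.map (fun a => X - C a)).prod
  let I := {s : Multiset ℂ // s ∈ m.roots.powerset.toFinset ∧ aeval f (q s) ≠ 0}
  have hfin : Finite I :=
    Set.Finite.to_subtype ((m.roots.powerset.toFinset.finite_toSet).subset (fun s hs => hs.1))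
  have hcov : (⋃ i : I, ((LinearMap.ker (aeval f (q i.1)) : Submodule ℂ V) : Set V)) ≠ Set.univ := by
    intro h
    obtain ⟨i, hi⟩ := Subspace.exists_eq_top_of_iUnion_eq_univ h
    exact i.2.2 (LinearMap.ker_eq_top.mp hi)
  obtain ⟨v, hv⟩ := (Set.ne_univ_iff_exists_notMem _).mp hcov
  refine ⟨v, fun p hp => ?_⟩
  simp only [Set.mem_iUnion, not_exists, SetLike.mem_coe, LinearMap.mem_ker] at hv
  set d := EuclideanDomain.gcd p m with hd
  have hdm : d ∣ m := EuclideanDomain.gcd_dvd_right p m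
  have hdp : d ∣ p := EuclideanDomain.gcd_dvd_left p m
  have hd0 : d ≠ 0 := fun h => hm0 (zero_dvd_iff.mp (h ▸ hdm))
  have hdv : aeval f d v = 0 := by
    rw [hd, EuclideanDomain.gcd_eq_gcd_ab p m, mul_comm p, mul_comm m]
    simp [hp, hm, minpoly.aeval]
  have hdq : d = C d.leadingCoeff * q d.roots := (IsAlgClosed.splits d).eq_prod_roots
  have hq : aeval f (q d.roots) = 0 := by
    by_contra hne
    refine hv ⟨d.roots, ?_, hne⟩ ?_
    · simpa using Polynomial.roots.le_of_dvd hm0 hdm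
    · rw [hdq] at hdv
      simpa [← Algebra.smul_def, hd0] using hdv
  have hdf : aeval f d = 0 := by rw [hdq]; simp [hq]
  obtain ⟨c, hc⟩ := hdp
  rw [hc]; simp [hdf]

open Polynomial in
theorem aux_cyc
    (V : Type*) [AddCommGroup V] [Module ℂ V] [FiniteDimensional ℂ V]
    (f : Module.End ℂ V)
    (hf : (minpoly ℂ f).natDegree = Module.finrank ℂ V) :
    ∃ v : V, ∀ w : V, ∃ p : ℂ[X], aeval f p v = w := by
  obtain ⟨v, hv⟩ := aux_sep V f
  refine ⟨v, ?_⟩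
  let φ : degreeLT ℂ (Module.finrank ℂ V) →ₗ[ℂ] V :=
    ((LinearMap.applyₗ v).comp (aeval f).toLinearMap).comp (Submodule.subtype _)
  have hφ : ∀ p, φ p = aeval f p.1 v := fun p => rfl
  have hinj : Function.Injective φ := by
    rw [injective_iff_map_eq_zero]
    intro p hp
    have h0 := hv p.1 (by rw [← hφ, hp])
    have hlt := mem_degreeLT.mp p.2
    apply Subtype.ext
    by_contra hne
    have h1 := minpoly.degree_le_of_ne_zero ℂ f hne h0
    rw [degree_eq_natDegree (minpoly.ne_zero (Algebra.IsIntegral.isIntegral f)), hf] at h1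
    exact absurd hlt (not_lt.mpr h1)
  have : FiniteDimensional ℂ (degreeLT ℂ (Module.finrank ℂ V)) :=
    (degreeLTEquiv ℂ _).symm.finiteDimensional
  have hs := (LinearMap.injective_iff_surjective_of_finrank_eq_finrank (f := φ)
    (by rw [(degreeLTEquiv ℂ _).finrank_eq]; simp)).mp hinj
  intro w
  obtain ⟨p, hp⟩ := hs w
  exact ⟨p.1, hp⟩


/-- Let `V` be a finite-dimensional complex vector space of dimension `r`
and `f : V → V` a linear endomorphism whose minimal polynomial has degree `r`.
Then a linear endomorphism `g` satisfies `f ∘ g = g ∘ f` if and only if `g` is a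
polynomial in `f`; i.e. `ker (ad f)` equals the subalgebra of polynomials in `f`. -/
theorem ker_adjoint_eq_polynomials
    (V : Type*) [AddCommGroup V] [Module ℂ V] [FiniteDimensional ℂ V]
    (f : Module.End ℂ V)
    (hf : (minpoly ℂ f).natDegree = Module.finrank ℂ V)
    (g : Module.End ℂ V) :
    f * g = g * f ↔ ∃ P : Polynomial ℂ, g = Polynomial.aeval f P := by
  constructor
  · intro h
    obtain ⟨v, hv⟩ := aux_cyc V f hf
    obtain ⟨P, hP⟩ := hv (g v)
    refine ⟨P, LinearMap.ext fun w => ?_⟩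
    obtain ⟨Q, rfl⟩ := hv w
    have hc : Commute g (Polynomial.aeval f Q) := by
      have h' : Commute g f := h.symm
      induction Q using Polynomial.induction_on' with
      | add p q hp hq => rw [map_add]; exact hp.add_right hq
      | monomial n a =>
        rw [Polynomial.aeval_monomial]
        exact (Algebra.commute_algebraMap_right a g).mul_right (h'.pow_right n)
    have h1 := congrArg (fun k : Module.End ℂ V => k v) hc.eq
    simp only [Module.End.mul_apply] at h1
    rw [h1, ← hP, ← Module.End.mul_apply, ← Module.End.mul_apply, ← map_mul, ← map_mul, mul_comm]
  · rintro ⟨P, rfl⟩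
    have h := congrArg (Polynomial.aeval f) (mul_comm Polynomial.X P)
    simpa using h
end

section
/- Let V be a finite-dimensional complex vector space, f : V → V a linear endomorphism whose minimal polynomial has degree dim V, θ : V* → V a symmetric linear isomorphism and κ : V → V* a symmetric linear map with f = θ ∘ κ. Let τ, τ' : V* → V and ξ, ξ' : V → V* be symmetric linear maps, and let g, g' ∈ End(V) satisfy f∘g − g∘f = θ∘ξ + τ∘κ and f∘g' − g'∘f = θ∘ξ' + τ'∘κ. Then Tr(f ∘ (g∘g' − g'∘g)) = (1/2)·(Tr(τ∘ξ') − Tr(τ'∘ξ)). (This identifies the pairing (1/2)Tr(τ∘ξ' − τ'∘ξ) with the Kirillov–Kostant symplectic form Tr(f∘[g,g']) on the adjoint orbit of f.) -/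
theorem kk_aux {V : Type*} [AddCommGroup V] [Module ℂ V] (tr : Module.End ℂ V →ₗ[ℂ] ℂ)
    (cyc : ∀ a b, tr (a * b) = tr (b * a)) (f S A T Y : Module.End ℂ V)
    (h1 : f * S - S * f = T * f - f * T) (h2 : f * A - A * f = Y) :
    tr (f * (S * A - A * S)) = tr (Y * T) := by
  have e1 : tr (f * (S * A - A * S)) = tr ((f * S - S * f) * A) := by
    have := cyc (f * A) S
    simp only [mul_sub, sub_mul, map_sub, mul_assoc] at this ⊢
    rw [this]
  rw [e1, h1, ← h2]
  have h3 := cyc (T * f) A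
  have h4 := cyc (f * T) A
  have h5 := cyc (f * A) T
  have h6 := cyc f (T * A)
  have h7 := cyc f (A * T)
  simp only [mul_sub, sub_mul, map_sub, mul_assoc] at *
  have h8 := cyc T (f * A)
  simp only [mul_assoc] at h8
  linear_combination h8 - h4

theorem kk_main {V : Type*} [AddCommGroup V] [Module ℂ V] (tr : Module.End ℂ V →ₗ[ℂ] ℂ)
    (cyc : ∀ a b, tr (a * b) = tr (b * a)) (f g h X T g' h' X' T' : Module.End ℂ V)
    (h1 : f * g - g * f = X + T * f) (h2 : h * f - f * h = X + f * T)
    (h1' : f * g' - g' * f = X' + T' * f) (h2' : h' * f - f * h' = X' + f * T')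
    (k : tr (f * (g * g' - g' * g)) = tr ((h' * h - h * h') * f)) :
    tr (f * (g * g' - g' * g)) = (1 / 2 : ℂ) * (tr (T * X') - tr (T' * X)) := by
  have a1 := kk_aux tr cyc f (g + h) (g' - h') T (X' + T' * f + (X' + f * T'))
    (by rw [← sub_eq_zero]; rw [← sub_eq_zero] at h1 h2
        calc _ = (f * g - g * f - (X + T * f)) - (h * f - f * h - (X + f * T)) := by noncomm_ring
          _ = 0 := by rw [h1, h2, sub_zero])
    (by rw [← h1', ← h2']; noncomm_ring)
  have a2 := kk_aux tr cyc f (g' + h') (g - h) T' (X + T * f + (X + f * T))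
    (by rw [← sub_eq_zero]; rw [← sub_eq_zero] at h1' h2'
        calc _ = (f * g' - g' * f - (X' + T' * f)) - (h' * f - f * h' - (X' + f * T')) := by
                  noncomm_ring
          _ = 0 := by rw [h1', h2', sub_zero])
    (by rw [← h1, ← h2]; noncomm_ring)
  rw [cyc _ f] at k
  have c1 := cyc T X'
  have c2 := cyc T' X
  have c3 := cyc T' (f * T)
  have c4 := cyc T (f * T')
  simp only [mul_sub, sub_mul, mul_add, add_mul, map_sub, map_add, mul_assoc] at *
  linear_combination (1/4) * a1 - (1/4) * a2 + (1/2) * k - (1/2) * c1 + (1/2) * c2 + (1/4) * c3 - (1/4) * c4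

/-- With `f = θ ∘ κ` a symmetric factorization of an endomorphism whose
minimal polynomial has degree `dim V`, and symmetric maps `τ, τ', ξ, ξ'` together with
`g, g'` satisfying `f∘g − g∘f = θ∘ξ + τ∘κ` and `f∘g' − g'∘f = θ∘ξ' + τ'∘κ`, the
Kirillov–Kostant pairing `Tr(f ∘ [g, g'])` equals `(1/2)(Tr(τ∘ξ') − Tr(τ'∘ξ))`. -/
theorem kirillov_kostant_form_eq
    (V : Type*) [AddCommGroup V] [Module ℂ V] [FiniteDimensional ℂ V]
    (f : Module.End ℂ V)
    (hf : (minpoly ℂ f).natDegree = Module.finrank ℂ V)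
    (θ : Module.Dual ℂ V →ₗ[ℂ] V) (κ : V →ₗ[ℂ] Module.Dual ℂ V)
    (hθbij : Function.Bijective θ)
    (hθsym : ∀ φ ψ : Module.Dual ℂ V, ψ (θ φ) = φ (θ ψ))
    (hκsym : ∀ v w : V, κ v w = κ w v)
    (hfθκ : f = θ ∘ₗ κ)
    (τ τ' : Module.Dual ℂ V →ₗ[ℂ] V) (ξ ξ' : V →ₗ[ℂ] Module.Dual ℂ V)
    (hτsym : ∀ φ ψ : Module.Dual ℂ V, ψ (τ φ) = φ (τ ψ))
    (hτ'sym : ∀ φ ψ : Module.Dual ℂ V, ψ (τ' φ) = φ (τ' ψ))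
    (hξsym : ∀ v w : V, ξ v w = ξ w v)
    (hξ'sym : ∀ v w : V, ξ' v w = ξ' w v)
    (g g' : Module.End ℂ V)
    (hg : f ∘ₗ g - g ∘ₗ f = θ ∘ₗ ξ + τ ∘ₗ κ)
    (hg' : f ∘ₗ g' - g' ∘ₗ f = θ ∘ₗ ξ' + τ' ∘ₗ κ) :
    LinearMap.trace ℂ V (f ∘ₗ (g ∘ₗ g' - g' ∘ₗ g)) =
      (1 / 2 : ℂ) *
        (LinearMap.trace ℂ V (τ ∘ₗ ξ') - LinearMap.trace ℂ V (τ' ∘ₗ ξ)) := by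
  let e := LinearEquiv.ofBijective θ hθbij
  have he : ∀ φ, e φ = θ φ := fun φ => rfl
  have hes : ∀ v, θ (e.symm v) = v := fun v => e.apply_symm_apply v
  have hse : ∀ φ, e.symm (θ φ) = φ := fun φ => e.symm_apply_apply φ
  let st : Module.End ℂ V → Module.End ℂ V := fun a =>
    θ ∘ₗ (Module.Dual.transpose (R := ℂ) a) ∘ₗ e.symm.toLinearMap
  have st_apply : ∀ a v, st a v = θ ((e.symm v) ∘ₗ a) := fun a v => rfl
  have st_mul : ∀ a b, st (a * b) = st b * st a := by
    intro a b
    ext v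
    simp only [Module.End.mul_apply, st_apply, hse]
    rfl
  have st_sub : ∀ a b, st (a - b) = st a - st b := by
    intro a b
    ext v
    simp only [LinearMap.sub_apply, st_apply, LinearMap.comp_sub, map_sub]
  have st_add : ∀ a b, st (a + b) = st a + st b := by
    intro a b
    ext v
    simp only [LinearMap.add_apply, st_apply, LinearMap.comp_add, map_add]
  have st_tr : ∀ a, LinearMap.trace ℂ V (st a) = LinearMap.trace ℂ V a := by
    intro a
    rw [← LinearMap.trace_transpose' a]
    exact LinearMap.trace_conj' (Module.Dual.transpose (R := ℂ) a) e
  have sym1 : ∀ ζ : V →ₗ[ℂ] Module.Dual ℂ V, (∀ v w, ζ v w = ζ w v) →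
      st (θ ∘ₗ ζ) = θ ∘ₗ ζ := by
    intro ζ hζ
    ext v
    rw [st_apply, LinearMap.comp_apply]
    congr 1
    ext w
    rw [LinearMap.comp_apply, LinearMap.comp_apply, hθsym, hes, hζ]
  have sym2 : ∀ ζ : Module.Dual ℂ V →ₗ[ℂ] V, (∀ φ ψ : Module.Dual ℂ V, ψ (ζ φ) = φ (ζ ψ)) →
      st (ζ ∘ₗ e.symm.toLinearMap) = ζ ∘ₗ e.symm.toLinearMap := by
    intro ζ hζ
    ext v
    rw [st_apply]
    apply e.symm.injective
    rw [hse]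
    ext w
    rw [LinearMap.comp_apply, LinearMap.comp_apply, LinearMap.comp_apply, LinearEquiv.coe_coe,
      hζ]
    conv_rhs => rw [← hes w, hθsym, hes]
  have fac : ∀ ζ : Module.Dual ℂ V →ₗ[ℂ] V, ∀ η : V →ₗ[ℂ] Module.Dual ℂ V,
      ζ ∘ₗ η = (ζ ∘ₗ e.symm.toLinearMap) * (θ ∘ₗ η) := by
    intro ζ η
    ext v
    simp only [Module.End.mul_apply, LinearMap.comp_apply, LinearEquiv.coe_coe, hse]
  have sf : st f = f := by rw [hfθκ]; exact sym1 κ hκsym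
  have G : ∀ (τ : Module.Dual ℂ V →ₗ[ℂ] V) (ξ : V →ₗ[ℂ] Module.Dual ℂ V) (g : Module.End ℂ V),
      f ∘ₗ g - g ∘ₗ f = θ ∘ₗ ξ + τ ∘ₗ κ →
      f * g - g * f = θ ∘ₗ ξ + (τ ∘ₗ e.symm.toLinearMap) * f := by
    intro τ ξ g hg
    rw [fac τ κ, ← hfθκ] at hg
    exact hg
  have H := G τ ξ g hg
  have H' := G τ' ξ' g' hg'
  have K := congrArg st H
  have K' := congrArg st H'
  rw [st_sub, st_add, st_mul, st_mul, st_mul, sf, sym1 _ ‹_›, sym2 _ ‹_›] at K K'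
  rw [fac τ ξ', fac τ' ξ]
  refine kk_main (LinearMap.trace ℂ V) (LinearMap.trace_mul_comm ℂ) f g (st g) _ _ g' (st g') _ _
    H K H' K' ?_
  rw [← st_tr, st_mul, st_sub, st_mul, st_mul, sf]
end

section
/- Let V be a finite-dimensional complex vector space, f : V → V a linear endomorphism whose minimal polynomial has degree dim V, θ : V* → V a symmetric linear isomorphism and κ : V → V* a symmetric linear map with f = θ ∘ κ. If a : V* → V and b : V → V* are symmetric linear maps with θ∘b + a∘κ = 0, then there exists a polynomial P ∈ ℂ[T] such that a = θ ∘ ᵗ(P(f)) and b = −ᵗ(P(f)) ∘ κ. -/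
open Polynomial in
theorem exists_cyclic_aux {V : Type*} [AddCommGroup V] [Module ℂ V] [FiniteDimensional ℂ V]
    (f : Module.End ℂ V) (hf : (minpoly ℂ f).natDegree = Module.finrank ℂ V) :
    ∃ x : V, ∀ v : V, ∃ p : ℂ[X], aeval f p x = v := by
  obtain ⟨x, hx⟩ := Module.exists_ker_toSpanSingleton_eq_annihilator ℂ[X] (Module.AEval' f)
  obtain ⟨x, rfl⟩ := (Module.AEval'.of f).surjective x
  have key : ∀ p : ℂ[X], aeval f p x = 0 → aeval f p = 0 := by
    intro p hp
    have h1 : p ∈ Module.annihilator ℂ[X] (Module.AEval' f) := by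
      rw [← hx, LinearMap.mem_ker, LinearMap.toSpanSingleton_apply]
      exact hp
    rw [Module.mem_annihilator] at h1
    ext v
    exact h1 (Module.AEval'.of f v)
  refine ⟨x, ?_⟩
  let L : degreeLT ℂ (Module.finrank ℂ V) →ₗ[ℂ] V :=
    (LinearMap.applyₗ x ∘ₗ (aeval f).toLinearMap) ∘ₗ (degreeLT ℂ (Module.finrank ℂ V)).subtype
  have hL : ∀ p, L p = aeval f (p : ℂ[X]) x := fun p => rfl
  have inj : Function.Injective L := by
    rw [injective_iff_map_eq_zero]
    rintro ⟨p, hp⟩ h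
    have h2 := key p (by simpa [hL] using h)
    rw [mem_degreeLT, ← hf] at hp
    by_contra hne
    have hp0 : p ≠ 0 := fun h => hne (by simp [h])
    have h3 := minpoly.degree_le_of_ne_zero ℂ f hp0 h2
    rw [degree_eq_natDegree (minpoly.ne_zero (Algebra.IsIntegral.isIntegral f))] at h3
    exact absurd hp (not_lt.mpr h3)
  have : FiniteDimensional ℂ (degreeLT ℂ (Module.finrank ℂ V)) :=
    Module.Finite.equiv (degreeLTEquiv ℂ _).symm
  have fr : Module.finrank ℂ (degreeLT ℂ (Module.finrank ℂ V)) = Module.finrank ℂ V := by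
    rw [(degreeLTEquiv ℂ _).finrank_eq]; simp
  have surj := (LinearMap.injective_iff_surjective_of_finrank_eq_finrank fr).1 inj
  intro v
  obtain ⟨p, hp⟩ := surj v
  exact ⟨p, hp⟩

/-- With `f = θ ∘ κ` a symmetric factorization of an endomorphism whose
minimal polynomial has degree `dim V`: if `a : V* → V` and `b : V → V*` are symmetric
linear maps with `θ∘b + a∘κ = 0`, then there exists a polynomial `P ∈ ℂ[T]` such that
`a = θ ∘ ᵗ(P(f))` and `b = −ᵗ(P(f)) ∘ κ`. -/
theorem kernel_pairing_is_coboundary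
    (V : Type*) [AddCommGroup V] [Module ℂ V] [FiniteDimensional ℂ V]
    (f : Module.End ℂ V)
    (hf : (minpoly ℂ f).natDegree = Module.finrank ℂ V)
    (θ : Module.Dual ℂ V →ₗ[ℂ] V) (κ : V →ₗ[ℂ] Module.Dual ℂ V)
    (hθbij : Function.Bijective θ)
    (hθsym : ∀ φ ψ : Module.Dual ℂ V, ψ (θ φ) = φ (θ ψ))
    (hκsym : ∀ v w : V, κ v w = κ w v)
    (hfθκ : f = θ ∘ₗ κ)
    (a : Module.Dual ℂ V →ₗ[ℂ] V) (b : V →ₗ[ℂ] Module.Dual ℂ V)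
    (hasym : ∀ φ ψ : Module.Dual ℂ V, ψ (a φ) = φ (a ψ))
    (hbsym : ∀ v w : V, b v w = b w v)
    (hab : θ ∘ₗ b + a ∘ₗ κ = 0) :
    ∃ P : Polynomial ℂ,
      a = θ ∘ₗ LinearMap.dualMap (Polynomial.aeval f P) ∧
      b = -(LinearMap.dualMap (Polynomial.aeval f P) ∘ₗ κ) := by
  let e := LinearEquiv.ofBijective θ hθbij
  let g : Module.End ℂ V := a ∘ₗ e.symm.toLinearMap
  have hg : ∀ φ, g (θ φ) = a φ := fun φ => congrArg a (e.symm_apply_apply φ)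
  have ha : ∀ φ, a φ = θ (g.dualMap φ) := by
    intro φ
    rw [← sub_eq_zero, ← Module.forall_dual_apply_eq_zero_iff ℂ]
    intro ψ
    rw [map_sub, hasym, hθsym, LinearMap.dualMap_apply, hg, sub_self]
  have hb : ∀ v, b v = -(g.dualMap (κ v)) := by
    intro v
    apply hθbij.1
    have h := LinearMap.congr_fun hab v
    simp only [LinearMap.add_apply, LinearMap.comp_apply, LinearMap.zero_apply] at h
    rw [map_neg, ← ha]
    exact eq_neg_of_add_eq_zero_left h
  have hk : ∀ v, g.dualMap (κ v) = κ (g v) := by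
    intro v
    ext w
    have h := hbsym v w
    rw [hb, hb] at h
    simp only [LinearMap.neg_apply, LinearMap.dualMap_apply, neg_inj] at h
    rw [LinearMap.dualMap_apply, h, hκsym]
  have hc : Commute g f := by
    ext v
    simp only [Module.End.mul_apply, hfθκ, LinearMap.comp_apply]
    rw [hg, ha, hk]
  obtain ⟨x, hx⟩ := exists_cyclic_aux f hf
  obtain ⟨P, hP⟩ := hx (g x)
  have comm : ∀ q : Polynomial ℂ, Commute g (Polynomial.aeval f q) := fun q =>
    Algebra.commute_of_mem_adjoin_singleton_of_commute (R := ℂ)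
      (Polynomial.aeval_mem_adjoin_singleton ℂ f) hc
  have hgP : Polynomial.aeval f P = g := by
    ext v
    obtain ⟨q, rfl⟩ := hx v
    have h1 := LinearMap.congr_fun (comm q).eq x
    have h2 : (Polynomial.aeval f P * Polynomial.aeval f q) x
        = (Polynomial.aeval f q * Polynomial.aeval f P) x := by
      rw [← map_mul, ← map_mul, mul_comm]
    simp only [Module.End.mul_apply] at h1 h2
    rw [h1, h2, hP]
  refine ⟨P, ?_, ?_⟩
  · rw [hgP]; exact LinearMap.ext ha
  · rw [hgP]; exact LinearMap.ext hb
end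

section
/- Let V be a finite-dimensional complex vector space, f : V → V a linear endomorphism whose minimal polynomial has degree dim V, θ : V* → V a symmetric linear isomorphism and κ : V → V* a symmetric linear map with f = θ ∘ κ. Fix a polynomial P ∈ ℂ[T] and set τ := θ ∘ ᵗ(P(f)) and ξ := −ᵗ(P(f)) ∘ κ. If τ' : V* → V and ξ' : V → V* are symmetric linear maps with Tr(fⁱ ∘ (θ∘ξ' + τ'∘κ)) = 0 for every natural number i, then Tr(τ∘ξ' − τ'∘ξ) = 0. (This is the vanishing of the pairing (1/2)Tr(τ∘ξ' − τ'∘ξ) on coboundaries, which makes it well defined on the tangent space of the adjoint orbit.) -/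
/-- With `f = θ ∘ κ` a symmetric factorization of an endomorphism whose
minimal polynomial has degree `dim V`, let `P ∈ ℂ[T]` and set `τ := θ ∘ ᵗ(P(f))`,
`ξ := −ᵗ(P(f)) ∘ κ`.  If `τ', ξ'` are symmetric with `Tr(fⁱ ∘ (θ∘ξ' + τ'∘κ)) = 0`
for every `i`, then `Tr(τ∘ξ' − τ'∘ξ) = 0`. -/
theorem pairing_vanishes_on_coboundaries
    (V : Type*) [AddCommGroup V] [Module ℂ V] [FiniteDimensional ℂ V]
    (f : Module.End ℂ V)
    (hf : (minpoly ℂ f).natDegree = Module.finrank ℂ V)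
    (θ : Module.Dual ℂ V →ₗ[ℂ] V) (κ : V →ₗ[ℂ] Module.Dual ℂ V)
    (hθbij : Function.Bijective θ)
    (hθsym : ∀ φ ψ : Module.Dual ℂ V, ψ (θ φ) = φ (θ ψ))
    (hκsym : ∀ v w : V, κ v w = κ w v)
    (hfθκ : f = θ ∘ₗ κ)
    (P : Polynomial ℂ)
    (τ : Module.Dual ℂ V →ₗ[ℂ] V) (ξ : V →ₗ[ℂ] Module.Dual ℂ V)
    (hτ : τ = θ ∘ₗ LinearMap.dualMap (Polynomial.aeval f P))
    (hξ : ξ = -(LinearMap.dualMap (Polynomial.aeval f P) ∘ₗ κ))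
    (τ' : Module.Dual ℂ V →ₗ[ℂ] V) (ξ' : V →ₗ[ℂ] Module.Dual ℂ V)
    (hτ'sym : ∀ φ ψ : Module.Dual ℂ V, ψ (τ' φ) = φ (τ' ψ))
    (hξ'sym : ∀ v w : V, ξ' v w = ξ' w v)
    (htr : ∀ i : ℕ,
      LinearMap.trace ℂ V ((f ^ i) ∘ₗ (θ ∘ₗ ξ' + τ' ∘ₗ κ)) = 0) :
    LinearMap.trace ℂ V (τ ∘ₗ ξ' - τ' ∘ₗ ξ) = 0 := by
  have hf1 : ∀ v w, κ (f v) w = κ v (f w) := by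
    intro v w
    rw [hfθκ]
    simp only [LinearMap.comp_apply]
    rw [hκsym (θ (κ v)) w, hθsym (κ v) (κ w)]
  have hf2 : ∀ φ ψ : Module.Dual ℂ V, ψ (f (θ φ)) = φ (f (θ ψ)) := by
    intro φ ψ
    rw [hfθκ]
    simp only [LinearMap.comp_apply]
    rw [hθsym (κ (θ φ)) ψ, hθsym (κ (θ ψ)) φ, hκsym]
  have hf3 : ∀ φ : Module.Dual ℂ V, θ (φ ∘ₗ f) = f (θ φ) := by
    intro φ
    rw [← sub_eq_zero]
    rw [← Module.forall_dual_apply_eq_zero_iff ℂ]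
    intro ψ
    rw [map_sub, sub_eq_zero, hf2, hθsym]
    rfl
  have hp1 : ∀ (n : ℕ) (v w : V), κ ((f ^ n) v) w = κ v ((f ^ n) w) := by
    intro n
    induction n with
    | zero => intro v w; simp
    | succ n ih =>
      intro v w
      rw [pow_succ, Module.End.mul_apply, ih, hf1, ← Module.End.mul_apply, ← pow_succ',
        ← pow_succ]
  have hp3 : ∀ (n : ℕ) (φ : Module.Dual ℂ V), θ (φ ∘ₗ (f ^ n)) = (f ^ n) (θ φ) := by
    intro n
    induction n with
    | zero => intro φ; simp [Module.End.one_eq_id]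
    | succ n ih =>
      intro φ
      have : φ ∘ₗ (f ^ (n + 1)) = (φ ∘ₗ f ^ n) ∘ₗ f := by
        rw [pow_succ]; rfl
      rw [this, hf3, ih, pow_succ', Module.End.mul_apply]
  have h1 : ∀ Q : Polynomial ℂ, LinearMap.dualMap (Polynomial.aeval f Q) ∘ₗ κ
      = κ ∘ₗ Polynomial.aeval f Q := by
    intro Q
    ext v w
    simp only [LinearMap.comp_apply, LinearMap.dualMap_apply]
    induction Q using Polynomial.induction_on' with
    | add p q hp hq => simp [hp, hq]
    | monomial n a => simp [Polynomial.aeval_monomial, hp1]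
  have h3 : ∀ Q : Polynomial ℂ, θ ∘ₗ LinearMap.dualMap (Polynomial.aeval f Q)
      = Polynomial.aeval f Q ∘ₗ θ := by
    intro Q
    apply LinearMap.ext
    intro φ
    change θ (φ ∘ₗ Polynomial.aeval f Q) = Polynomial.aeval f Q (θ φ)
    induction Q using Polynomial.induction_on' with
    | add p q hp hq => simp [hp, hq, LinearMap.comp_add]
    | monomial n a =>
      rw [Polynomial.aeval_monomial, ← Algebra.smul_def, LinearMap.comp_smul, map_smul, hp3]
      rfl
  have htr' : ∀ Q : Polynomial ℂ, LinearMap.trace ℂ V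
      ((Polynomial.aeval f Q) ∘ₗ (θ ∘ₗ ξ' + τ' ∘ₗ κ)) = 0 := by
    intro Q
    induction Q using Polynomial.induction_on' with
    | add p q hp hq => rw [map_add, LinearMap.add_comp, map_add, hp, hq, add_zero]
    | monomial n a =>
      rw [Polynomial.aeval_monomial, ← Algebra.smul_def, LinearMap.smul_comp, map_smul, htr,
        smul_zero]
  have key := htr' P
  rw [LinearMap.comp_add, map_add] at key
  rw [hτ, hξ, h1, h3, LinearMap.comp_neg, sub_neg_eq_add, map_add, LinearMap.comp_assoc]
  have e : LinearMap.trace ℂ V (τ' ∘ₗ κ ∘ₗ Polynomial.aeval f P)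
      = LinearMap.trace ℂ V (Polynomial.aeval f P ∘ₗ τ' ∘ₗ κ) := by
    exact LinearMap.trace_comp_comm' (Polynomial.aeval f P) (τ' ∘ₗ κ)
  rw [e, key]
end

section
/- Let m ≥ 1 and q ≥ 0 be integers, let ε be a complex number, and let R be a real number with |ε| < R. Then ∮_{|z|=R} z^q/(z^m − ε^m) dz = 2πi·ε^{q+1−m} if m divides q+1, and ∮_{|z|=R} z^q/(z^m − ε^m) dz = 0 otherwise. (Note that if m divides q+1 then q+1−m ≥ 0, so ε^{q+1−m} is an ordinary natural power, with ε⁰ = 1.) -/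
open Complex

lemma aux_ne (m : ℕ) (hm : 1 ≤ m) (ε : ℂ) (R : ℝ) (hε : ‖ε‖ < R) (z : ℂ) (hz : ‖z‖ = R) :
    R ^ m - ‖ε‖ ^ m ≤ ‖z ^ m - ε ^ m‖ ∧ 0 < R ^ m - ‖ε‖ ^ m := by
  constructor
  · have := norm_sub_norm_le (z ^ m) (ε ^ m)
    rwa [norm_pow, norm_pow, hz] at this
  · have := pow_lt_pow_left₀ hε (norm_nonneg _) (by omega : m ≠ 0)
    linarith

lemma aux_rec (m : ℕ) (hm : 1 ≤ m) (ε : ℂ) (R : ℝ) (hε : ‖ε‖ < R) (q : ℤ) :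
    (∮ z in C(0, R), z ^ (q + m) / (z ^ m - ε ^ m)) =
      (∮ z in C(0, R), z ^ q) + ε ^ m * ∮ z in C(0, R), z ^ q / (z ^ m - ε ^ m) := by
  have hR : 0 < R := (norm_nonneg _).trans_lt hε
  have h0 : ∀ z ∈ Metric.sphere (0 : ℂ) R, z ≠ 0 := by
    rintro z hz rfl
    simp at hz
    exact hR.ne hz
  have hd : ∀ z ∈ Metric.sphere (0 : ℂ) R, z ^ m - ε ^ m ≠ 0 := by
    intro z hz
    have := aux_ne m hm ε R hε z (by simpa using hz)
    exact norm_pos_iff.1 (this.2.trans_le this.1)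
  have hc : ContinuousOn (fun z : ℂ => z ^ q) (Metric.sphere (0 : ℂ) R) :=
    fun z hz => (continuousAt_zpow₀ z q (Or.inl (h0 z hz))).continuousWithinAt
  have hc2 : ContinuousOn (fun z : ℂ => ε ^ m * (z ^ q / (z ^ m - ε ^ m)))
      (Metric.sphere (0 : ℂ) R) :=
    continuousOn_const.mul (hc.div (by fun_prop) hd)
  rw [← circleIntegral.integral_const_mul,
    ← circleIntegral.integral_add (hc.circleIntegrable hR.le) (hc2.circleIntegrable hR.le)]
  refine circleIntegral.integral_congr hR.le fun z hz => ?_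
  have h1 := h0 z hz
  have h2 := hd z hz
  beta_reduce
  rw [zpow_add₀ h1, zpow_natCast]
  field_simp
  ring

lemma aux_zpow (R : ℝ) (hR : 0 < R) (q : ℤ) :
    (∮ z in C(0, R), z ^ q) = if q = -1 then 2 * Real.pi * Complex.I else 0 := by
  split_ifs with h
  · subst h
    simpa using circleIntegral.integral_sub_center_inv (0 : ℂ) hR.ne'
  · simpa using circleIntegral.integral_sub_zpow_of_ne h 0 0 R

lemma aux_iter (m : ℕ) (hm : 1 ≤ m) (ε : ℂ) (R : ℝ) (hε : ‖ε‖ < R) (q : ℤ) (hq : q < m - 1)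
    (N : ℕ) :
    (∮ z in C(0, R), z ^ q / (z ^ m - ε ^ m)) =
      (ε ^ m) ^ N * ∮ z in C(0, R), z ^ (q - m * N) / (z ^ m - ε ^ m) := by
  have hR : 0 < R := (norm_nonneg _).trans_lt hε
  induction N with
  | zero => simp
  | succ N ih =>
    have h := aux_rec m hm ε R hε (q - m * (N + 1 : ℕ))
    have e : q - m * (N + 1 : ℕ) + m = q - m * N := by push_cast; ring
    have hN : (0 : ℤ) ≤ m * N := by positivity
    have hne : q - m * (N + 1 : ℕ) ≠ -1 := by omega
    rw [e, aux_zpow R hR, if_neg hne, zero_add] at h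
    rw [ih, h, pow_succ, mul_assoc]

lemma aux_zero (m : ℕ) (hm : 1 ≤ m) (ε : ℂ) (R : ℝ) (hε : ‖ε‖ < R) (q : ℤ) (hq : q < m - 1) :
    (∮ z in C(0, R), z ^ q / (z ^ m - ε ^ m)) = 0 := by
  have hR : 0 < R := (norm_nonneg _).trans_lt hε
  set D := R ^ m - ‖ε‖ ^ m with hD
  have hb : ∀ N : ℕ, ‖∮ z in C(0, R), z ^ q / (z ^ m - ε ^ m)‖ ≤
      (2 * Real.pi * R * (R ^ q / D)) * ((‖ε‖ / R) ^ m) ^ N := by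
    intro N
    rw [aux_iter m hm ε R hε q hq N, norm_mul, norm_pow, norm_pow]
    have : ‖∮ z in C(0, R), z ^ (q - m * N) / (z ^ m - ε ^ m)‖ ≤
        2 * Real.pi * R * (R ^ (q - m * N) / D) := by
      refine circleIntegral.norm_integral_le_of_norm_le_const hR.le fun z hz => ?_
      have hz' : ‖z‖ = R := by simpa using hz
      obtain ⟨h1, h2⟩ := aux_ne m hm ε R hε z hz'
      rw [norm_div, norm_zpow, hz']
      gcongr
    refine (mul_le_mul_of_nonneg_left this (by positivity)).trans (le_of_eq ?_)
    rw [zpow_sub₀ hR.ne', zpow_mul, zpow_natCast, zpow_natCast, div_pow, div_pow]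
    ring
  have hlt : (‖ε‖ / R) ^ m < 1 :=
    pow_lt_one₀ (by positivity) ((div_lt_one hR).2 hε) (by omega)
  have ht := (tendsto_pow_atTop_nhds_zero_of_lt_one (by positivity) hlt).const_mul
    (2 * Real.pi * R * (R ^ q / D))
  rw [mul_zero] at ht
  exact norm_le_zero_iff.1 (ge_of_tendsto' ht hb)

/-- Let `m ≥ 1`, `q ≥ 0`, `ε ∈ ℂ` and `R ∈ ℝ` with `|ε| < R`.  Then
`∮_{|z|=R} z^q/(z^m − ε^m) dz = 2πi·ε^(q+1−m)` if `m ∣ q+1` and `= 0` otherwise. -/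
theorem circleIntegral_pow_div_pow_sub_pow
    (m q : ℕ) (hm : 1 ≤ m) (ε : ℂ) (R : ℝ) (hε : ‖ε‖ < R) :
    (∮ z in C(0, R), z ^ q / (z ^ m - ε ^ m)) =
      if m ∣ q + 1 then (2 * Real.pi * Complex.I) * ε ^ (q + 1 - m) else 0 := by
  have hR : 0 < R := (norm_nonneg _).trans_lt hε
  induction q using Nat.strong_induction_on with
  | _ q ih =>
  rcases lt_trichotomy (q + 1) m with h | h | h
  · rw [if_neg (Nat.not_dvd_of_pos_of_lt (by omega) h)]
    have := aux_zero m hm ε R hε q (by omega)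
    simpa only [zpow_natCast] using this
  · have h1 := aux_rec m hm ε R hε (-1)
    rw [aux_zero m hm ε R hε (-1) (by omega), aux_zpow R hR, if_pos rfl,
      show (-1 : ℤ) + m = (q : ℕ) by omega] at h1
    simp only [zpow_natCast] at h1
    rw [h1, if_pos (by rw [h])]
    simp [h]
  · obtain ⟨p, rfl⟩ : ∃ p, q = p + m := ⟨q - m, by omega⟩
    have h1 := aux_rec m hm ε R hε p
    rw [aux_zpow R hR, if_neg (by omega), zero_add, ← Nat.cast_add] at h1
    simp only [zpow_natCast] at h1
    rw [h1, ih p (by omega)]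
    have hd : m ∣ p + m + 1 ↔ m ∣ p + 1 := by
      rw [show p + m + 1 = p + 1 + m by ring]
      exact Nat.dvd_add_self_right
    simp only [hd]
    split_ifs with hdv
    · have := Nat.le_of_dvd (by omega) hdv
      rw [show p + m + 1 - m = m + (p + 1 - m) by omega, pow_add]
      ring
    · simp
end

section
/- Let V be a finite-dimensional complex vector space and let A₁, …, A_m (m ≥ 1) be linear endomorphisms of V such that the only endomorphisms commuting with every Aⱼ are the scalar multiples of the identity, i.e. ⋂_{j=1}^m ker(ad(Aⱼ)) = ℂ·id. Then ∑_{j=1}^m im(ad(Aⱼ)) = ker(Tr : End(V) → ℂ); that is, an endomorphism Y of V can be written as Y = ∑_{j=1}^m (Aⱼ∘Xⱼ − Xⱼ∘Aⱼ) for some X₁, …, X_m ∈ End(V) if and only if Tr(Y) = 0. -/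
theorem end_eq_zero_of_trace_mul
    (V : Type*) [AddCommGroup V] [Module ℂ V] [FiniteDimensional ℂ V]
    (P : Module.End ℂ V) (h : ∀ X : Module.End ℂ V, LinearMap.trace ℂ V (P * X) = 0) : P = 0 := by
  ext v
  rw [LinearMap.zero_apply, ← Module.forall_dual_apply_eq_zero_iff ℂ]
  intro f
  have h1 := h (f.smulRight v)
  have h2 : P * (f.smulRight v) = f.smulRight (P v) := by
    ext w
    simp
  rw [h2] at h1
  simpa using h1

theorem exists_trace_mul_repr
    (V : Type*) [AddCommGroup V] [Module ℂ V] [FiniteDimensional ℂ V]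
    (f : Module.Dual ℂ (Module.End ℂ V)) :
    ∃ P : Module.End ℂ V, ∀ X, f X = LinearMap.trace ℂ V (P * X) := by
  let T : Module.End ℂ V →ₗ[ℂ] Module.Dual ℂ (Module.End ℂ V) :=
    (LinearMap.mul ℂ (Module.End ℂ V)).compr₂ (LinearMap.trace ℂ V)
  have hinj : Function.Injective T := by
    rw [injective_iff_map_eq_zero]
    intro P hP
    exact end_eq_zero_of_trace_mul V P fun X => LinearMap.congr_fun hP X
  have hs : Function.Surjective T :=
    (LinearMap.injective_iff_surjective_of_finrank_eq_finrank
      (Subspace.dual_finrank_eq (K := ℂ) (V := Module.End ℂ V)).symm).1 hinj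
  obtain ⟨P, hP⟩ := hs f
  exact ⟨P, fun X => by rw [← hP]; rfl⟩


/-- Let `V` be a finite-dimensional complex vector space and
`A₁, …, A_m` endomorphisms of `V` such that the only endomorphisms commuting with every
`Aⱼ` are the scalars.  Then `∑ⱼ im (ad Aⱼ) = ker Tr`: an endomorphism `Y` is a sum
`∑ⱼ (Aⱼ∘Xⱼ − Xⱼ∘Aⱼ)` if and only if `Tr Y = 0`. -/
theorem sum_image_adjoint_eq_ker_trace
    (V : Type*) [AddCommGroup V] [Module ℂ V] [FiniteDimensional ℂ V]
    (m : ℕ) (hm : 1 ≤ m) (A : Fin m → Module.End ℂ V)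
    (hA : ∀ X : Module.End ℂ V, (∀ j, A j * X = X * A j) →
      ∃ c : ℂ, X = c • (1 : Module.End ℂ V)) :
    ∀ Y : Module.End ℂ V,
      (∃ X : Fin m → Module.End ℂ V, Y = ∑ j, (A j * X j - X j * A j)) ↔
        LinearMap.trace ℂ V Y = 0 := by

  intro Y
  constructor
  · rintro ⟨X, rfl⟩
    rw [map_sum]
    refine Finset.sum_eq_zero fun j _ => ?_
    rw [map_sub, LinearMap.trace_mul_comm, sub_self]
  · intro hY
    let Φ : (Fin m → Module.End ℂ V) →ₗ[ℂ] Module.End ℂ V :=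
      ∑ j, (LinearMap.mulLeft ℂ (A j) - LinearMap.mulRight ℂ (A j)) ∘ₗ LinearMap.proj j
    have hΦ : ∀ X, Φ X = ∑ j, (A j * X j - X j * A j) := by
      intro X
      simp [Φ, LinearMap.sum_apply]
    by_contra hne
    have hnot : Y ∉ LinearMap.range Φ := by
      rintro ⟨X, hX⟩
      exact hne ⟨X, by rw [← hX, hΦ]⟩
    obtain ⟨f, hfY, hf⟩ := Submodule.exists_le_ker_of_notMem hnot
    obtain ⟨P, hP⟩ := exists_trace_mul_repr V f
    obtain ⟨c, hc⟩ := hA P (by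
      intro j
      refine (sub_eq_zero.1 (end_eq_zero_of_trace_mul V (P * A j - A j * P) fun X => ?_)).symm
      have h0 : f (Φ (Pi.single j X)) = 0 := hf ⟨_, rfl⟩
      have h1 : Φ (Pi.single j X) = A j * X - X * A j := by
        rw [hΦ, Finset.sum_eq_single j]
        · simp
        · intro k _ hk
          simp [Pi.single_eq_of_ne hk]
        · simp
      rw [h1, hP, mul_sub, map_sub, ← mul_assoc, ← mul_assoc,
        LinearMap.trace_mul_comm ℂ (P * X) (A j)] at h0
      rw [sub_mul, map_sub, mul_assoc (A j)]
      exact h0)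
    apply hfY
    rw [hP, hc]
    simp [hY]
end

section
/- Let R be a (nontrivial) commutative local ring, E a finite free R-module of rank r ≥ 1, and μ₁, …, μ_r elements of R such that μᵢ − μⱼ is a unit of R for all i ≠ j. Let N be an R-linear endomorphism of E with (N − μ₁·id)∘⋯∘(N − μ_r·id) = 0. Then E is the internal direct sum E = ⨁_{k=1}^{r} ker(N − μₖ·id). If moreover the only polynomial P ∈ R[T] of degree < r with P(N) = 0 is the zero polynomial (equivalently, the R-algebra homomorphism R[T]/(∏ₖ(T − μₖ)) → End_R(E) sending T to N is injective), then each ker(N − μₖ·id) is a free R-module of rank 1. -/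
open Polynomial

theorem eigenspace_decomposition_local_ring
    (R : Type*) [CommRing R] [IsLocalRing R]
    (E : Type*) [AddCommGroup E] [Module R E] [Module.Free R E] [Module.Finite R E]
    (r : ℕ) (hr : 1 ≤ r) (hrank : Module.finrank R E = r)
    (μ : Fin r → R) (hμ : ∀ i j : Fin r, i ≠ j → IsUnit (μ i - μ j))
    (N : Module.End R E)
    (hN : Polynomial.aeval N (∏ k, (X - C (μ k))) = 0) :
    DirectSum.IsInternal
      (fun k : Fin r => LinearMap.ker (N - μ k • (1 : Module.End R E))) ∧
    ((∀ P : Polynomial R, P.degree < (r : WithBot ℕ) → Polynomial.aeval N P = 0 → P = 0) →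
      ∀ k : Fin r,
        Module.Free R ↥(LinearMap.ker (N - μ k • (1 : Module.End R E))) ∧
        Module.finrank R ↥(LinearMap.ker (N - μ k • (1 : Module.End R E))) = 1) := by
  classical
  have : Nonempty (Fin r) := ⟨⟨0, hr⟩⟩
  have hlin : ∀ k, aeval N (X - C (μ k)) = N - μ k • (1 : Module.End R E) := by
    intro k
    simp [Algebra.algebraMap_eq_smul_one]
  set Q : Fin r → R[X] := fun i => ∏ j ∈ Finset.univ \ {i}, (X - C (μ j)) with hQ
  have hQmul : ∀ k, (X - C (μ k)) * Q k = ∏ k, (X - C (μ k)) := by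
    intro k
    rw [hQ, ← Finset.prod_sdiff (Finset.subset_univ {k}), Finset.prod_singleton, mul_comm]
  have hcop : ∃ a : Fin r → R[X], (∑ i, a i * Q i) = 1 := by
    refine (exists_sum_eq_one_iff_pairwise_coprime (s := fun i => X - C (μ i))
      Finset.univ_nonempty).2 ?_
    intro i j hij
    exact isCoprime_X_sub_C_of_isUnit_sub (hμ _ _ (fun h => hij (Subtype.ext h)))
  obtain ⟨a, ha⟩ := hcop
  set p : Fin r → Module.End R E := fun i => aeval N (a i * Q i) with hp
  have hsum : ∀ x, ∑ i, p i x = x := by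
    intro x
    have := congrArg (fun P => aeval N P x) ha
    simpa [hp] using this
  have hker : ∀ k (P : R[X]) x, aeval N (P * Q k) x ∈
      LinearMap.ker (N - μ k • (1 : Module.End R E)) := by
    intro k P x
    rw [LinearMap.mem_ker, ← hlin, ← Module.End.mul_apply, ← map_mul, mul_left_comm, hQmul,
      map_mul, hN]
    simp
  have hzero : ∀ i j, i ≠ j → ∀ x ∈ LinearMap.ker (N - μ j • (1 : Module.End R E)),
      p i x = 0 := by
    intro i j hij x hx
    rw [LinearMap.mem_ker, ← hlin] at hx
    have hd : (X - C (μ j)) ∣ a i * Q i :=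
      Dvd.dvd.mul_left (Finset.dvd_prod_of_mem _ (by simp [hij.symm])) _
    obtain ⟨c, hc⟩ := hd
    simp only [hp]
    rw [hc, mul_comm, map_mul, Module.End.mul_apply, hx, map_zero]
  have hid : ∀ i, ∀ x ∈ LinearMap.ker (N - μ i • (1 : Module.End R E)), p i x = x := by
    intro i x hx
    conv_rhs => rw [← hsum x]
    rw [Finset.sum_eq_single i (fun j _ hj => hzero j i hj x hx) (by simp)]
  have hint : DirectSum.IsInternal
      (fun k : Fin r => LinearMap.ker (N - μ k • (1 : Module.End R E))) := by
    rw [DirectSum.isInternal_submodule_iff_iSupIndep_and_iSup_eq_top]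
    constructor
    · rw [iSupIndep_def]
      intro i
      rw [Submodule.disjoint_def]
      intro x hx hx'
      rw [← hid i x hx]
      have : (⨆ j, ⨆ (_ : j ≠ i), LinearMap.ker (N - μ j • (1 : Module.End R E)))
          ≤ LinearMap.ker (p i) :=
        iSup₂_le fun j hj y hy => hzero i j hj.symm y hy
      exact this hx'
    · rw [eq_top_iff]
      intro x _
      rw [← hsum x]
      exact Submodule.sum_mem _ fun i _ => Submodule.mem_iSup_of_mem i (hker i (a i) x)
  refine ⟨hint, fun hP => ?_⟩
  have hsplit : ∀ k, ((p k).codRestrict _ (hker k (a k))) ∘ₗ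
      (LinearMap.ker (N - μ k • (1 : Module.End R E))).subtype = LinearMap.id := by
    intro k
    ext x
    exact hid k x x.2
  have hproj : ∀ k, Module.Projective R (LinearMap.ker (N - μ k • (1 : Module.End R E))) :=
    fun k => Module.Projective.of_split _ _ (hsplit k)
  have hfin : ∀ k, Module.Finite R (LinearMap.ker (N - μ k • (1 : Module.End R E))) :=
    fun k => Module.Finite.of_surjective ((p k).codRestrict _ (hker k (a k)))
      (fun x => ⟨x, LinearMap.congr_fun (hsplit k) x⟩)
  have hfree : ∀ k, Module.Free R (LinearMap.ker (N - μ k • (1 : Module.End R E))) :=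
    fun k => Module.free_of_flat_of_isLocalRing
  have hpos : ∀ k, 1 ≤ Module.finrank R (LinearMap.ker (N - μ k • (1 : Module.End R E))) := by
    intro k
    by_contra hlt
    have h0 : Module.finrank R (LinearMap.ker (N - μ k • (1 : Module.End R E))) = 0 := by omega
    have hs : Subsingleton (LinearMap.ker (N - μ k • (1 : Module.End R E))) :=
      (Module.finrank_eq_zero_iff_of_free _ _).1 h0
    have hm : (Q k).Monic := monic_prod_of_monic _ _ fun j _ => monic_X_sub_C _
    refine hm.ne_zero (hP (Q k) ?_ ?_)
    · rw [degree_eq_natDegree hm.ne_zero, hQ,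
        natDegree_prod_of_monic _ _ fun j _ => monic_X_sub_C _]
      simp [Finset.card_sdiff]
      omega
    · ext x
      have := hker k 1 x
      rw [one_mul] at this
      exact congrArg Subtype.val (hs.elim ⟨_, this⟩ 0)
  have htot : ∑ k, Module.finrank R (LinearMap.ker (N - μ k • (1 : Module.End R E))) = r := by
    rw [← Module.finrank_directSum]
    exact (LinearEquiv.ofBijective (DirectSum.coeLinearMap _) hint).finrank_eq.trans hrank
  intro k
  refine ⟨hfree k, ?_⟩
  have := (Finset.sum_eq_sum_iff_of_le (s := Finset.univ) (f := fun _ : Fin r => 1)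
    (fun i _ => hpos i)).1 (by rw [htot]; simp)
  exact (this k (Finset.mem_univ k)).symm
end

section
/- Let m ≥ 2 be an integer, θ a real number, and ε, p complex numbers with p^m = ε^m and |p| ≤ 1. Let z : ℝ → ℂ be a function such that for every t ≥ 0: z is differentiable at t with derivative z'(t) = e^{iθ}·(z(t)^m − ε^m), |z(t)| ≤ 1, z(t) ≠ p, and |arg(e^{i(θ−π)/(m−1)}·z(t))| ≤ π/(3m). Assume also |arg(e^{i(θ−π)/(m−1)}·p)| ≤ π/(3m). Then z(t) converges to p as t → +∞. (This is the convergence of the flows of the vector field determined by dz/dt = e^{iθ}(z^m − ε^m) to the singular point p inside the sectorial region.) -/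
open Complex Filter

lemma aux_re (m : ℕ) (hm : 2 ≤ m) (w q : ℂ) (hw : |w.arg| ≤ Real.pi / (3 * m))
    (hq : |q.arg| ≤ Real.pi / (3 * m)) (a b : ℕ) (hab : a + b ≤ m) :
    (1/2 : ℝ) * (‖w‖ ^ a * ‖q‖ ^ b) ≤ (w ^ a * q ^ b).re := by
  have hm0 : (0 : ℝ) < m := by positivity
  have key : w ^ a * q ^ b = ((‖w‖ ^ a * ‖q‖ ^ b : ℝ) : ℂ) *
      Complex.exp (((a * w.arg + b * q.arg : ℝ) : ℂ) * Complex.I) := by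
    conv_lhs => rw [← Complex.norm_mul_exp_arg_mul_I w, ← Complex.norm_mul_exp_arg_mul_I q]
    rw [mul_pow, mul_pow, ← Complex.exp_nat_mul, ← Complex.exp_nat_mul]
    push_cast
    rw [add_mul, Complex.exp_add]
    ring_nf
  rw [key, Complex.re_ofReal_mul, Complex.exp_ofReal_mul_I_re]
  have h1 : |(a * w.arg + b * q.arg : ℝ)| ≤ Real.pi / 3 := by
    calc |(a * w.arg + b * q.arg : ℝ)| ≤ |a * w.arg| + |b * q.arg| := abs_add_le _ _
      _ = a * |w.arg| + b * |q.arg| := by simp [abs_mul]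
      _ ≤ a * (Real.pi / (3 * m)) + b * (Real.pi / (3 * m)) := by gcongr
      _ = ((a + b : ℕ) : ℝ) * (Real.pi / (3 * m)) := by push_cast; ring
      _ ≤ (m : ℝ) * (Real.pi / (3 * m)) := by
        have := Real.pi_pos
        gcongr
      _ = Real.pi / 3 := by field_simp
  have h2 : 1 / 2 ≤ Real.cos (a * w.arg + b * q.arg) := by
    rw [← Real.cos_pi_div_three, ← Real.cos_abs (a * w.arg + b * q.arg)]
    apply Real.cos_le_cos_of_nonneg_of_le_pi (abs_nonneg _) _ h1
    linarith [Real.pi_pos]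
  rw [mul_comm]
  gcongr

lemma aux_sum (m : ℕ) (hm : 2 ≤ m) (w q : ℂ) (hw : |w.arg| ≤ Real.pi / (3 * m))
    (hq : |q.arg| ≤ Real.pi / (3 * m)) :
    (1/2 : ℝ) * (‖w - q‖ / 2) ^ (m - 1) ≤
      (∑ i ∈ Finset.range m, w ^ i * q ^ (m - 1 - i)).re := by
  rw [Complex.re_sum]
  have h0 : ∀ i ∈ Finset.range m, (1/2 : ℝ) * (‖w‖ ^ i * ‖q‖ ^ (m - 1 - i)) ≤
      (w ^ i * q ^ (m - 1 - i)).re := by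
    intro i hi
    rw [Finset.mem_range] at hi
    exact aux_re m hm w q hw hq _ _ (by omega)
  refine le_trans ?_ (Finset.sum_le_sum h0)
  have hn := norm_sub_le w q
  have hs : ∀ j ∈ Finset.range m, (1/2 : ℝ) * (‖w‖ ^ j * ‖q‖ ^ (m - 1 - j)) ≤
      ∑ i ∈ Finset.range m, (1/2 : ℝ) * (‖w‖ ^ i * ‖q‖ ^ (m - 1 - i)) := fun j hj =>
    Finset.single_le_sum (f := fun i => (1/2 : ℝ) * (‖w‖ ^ i * ‖q‖ ^ (m - 1 - i)))
      (fun i _ => by positivity) hj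
  rcases le_total ‖q‖ ‖w‖ with h | h
  · refine le_trans ?_ (hs (m - 1) (by simp; omega))
    simp only [Nat.sub_self, pow_zero, mul_one]
    gcongr
    linarith
  · refine le_trans ?_ (hs 0 (by simp; omega))
    simp only [Nat.sub_zero, pow_zero, one_mul]
    gcongr
    linarith

lemma aux_ode (g g' : ℝ → ℝ) (hg : ∀ t, 0 ≤ t → HasDerivAt g (g' t) t) (hpos : ∀ t, 0 ≤ g t)
    (hneg : ∀ t, 0 ≤ t → g' t ≤ 0)
    (hK : ∀ δ > 0, ∃ K > 0, ∀ t, 0 ≤ t → δ ≤ g t → g' t ≤ -K) :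
    Tendsto g atTop (nhds 0) := by
  have anti : ∀ (f f' : ℝ → ℝ), (∀ t, 0 ≤ t → HasDerivAt f (f' t) t) →
      (∀ t, 0 ≤ t → f' t ≤ 0) → AntitoneOn f (Set.Ici 0) := by
    intro f f' hf hf'
    apply antitoneOn_of_deriv_nonpos (convex_Ici 0)
    · exact fun t ht => (hf t ht).continuousAt.continuousWithinAt
    · intro t ht
      rw [interior_Ici] at ht
      exact (hf t (le_of_lt ht)).differentiableAt.differentiableWithinAt
    · intro t ht
      rw [interior_Ici] at ht
      rw [(hf t (le_of_lt ht)).deriv]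
      exact hf' t (le_of_lt ht)
  have hA := anti g g' hg hneg
  rw [Metric.tendsto_atTop]
  intro δ hδ
  obtain ⟨K, hK0, hK⟩ := hK δ hδ
  have : ∃ T, 0 ≤ T ∧ g T < δ := by
    by_contra! hcon
    have hB := anti (fun t => g t + K * t) (fun t => g' t + K * 1)
      (fun t ht => (hg t ht).add ((hasDerivAt_id t).const_mul K))
      (fun t ht => by linarith [hK t ht (hcon t ht)])
    have hT : 0 ≤ g 0 / K := div_nonneg (hpos 0) hK0.le
    have h1 := hB (Set.mem_Ici.2 le_rfl) (Set.mem_Ici.2 hT) hT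
    have h2 := hcon _ hT
    have h3 : K * (g 0 / K) = g 0 := by field_simp
    simp only [mul_zero] at h1
    linarith
  obtain ⟨T, hT, hTδ⟩ := this
  refine ⟨T, fun t ht => ?_⟩
  have := hA (Set.mem_Ici.2 hT) (Set.mem_Ici.2 (hT.trans ht)) ht
  rw [Real.dist_eq, sub_zero, abs_of_nonneg (hpos t)]
  linarith

/-- Let `m ≥ 2`, `θ ∈ ℝ`, and `ε, p ∈ ℂ` with `p^m = ε^m` and `|p| ≤ 1`.
Suppose `z : ℝ → ℂ` satisfies, for all `t ≥ 0`: the ODE `z' = e^{iθ}(z^m − ε^m)`,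
`|z(t)| ≤ 1`, `z(t) ≠ p`, and the sector condition
`|arg(e^{i(θ−π)/(m−1)}·z(t))| ≤ π/(3m)`; suppose also
`|arg(e^{i(θ−π)/(m−1)}·p)| ≤ π/(3m)`.  Then `z(t) → p` as `t → +∞`. -/
theorem flow_tendsto_singular_point
    (m : ℕ) (hm : 2 ≤ m) (θ : ℝ) (ε p : ℂ)
    (hpε : p ^ m = ε ^ m) (hp1 : ‖p‖ ≤ 1)
    (z : ℝ → ℂ)
    (hderiv : ∀ t : ℝ, 0 ≤ t →
      HasDerivAt z (Complex.exp ((θ : ℂ) * Complex.I) * (z t ^ m - ε ^ m)) t)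
    (hbound : ∀ t : ℝ, 0 ≤ t → ‖z t‖ ≤ 1)
    (hne : ∀ t : ℝ, 0 ≤ t → z t ≠ p)
    (hsector : ∀ t : ℝ, 0 ≤ t →
      |(Complex.exp ((((θ : ℂ) - (Real.pi : ℂ)) / ((m : ℂ) - 1)) * Complex.I) *
          z t).arg| ≤ Real.pi / (3 * m))
    (hpsector :
      |(Complex.exp ((((θ : ℂ) - (Real.pi : ℂ)) / ((m : ℂ) - 1)) * Complex.I) *
          p).arg| ≤ Real.pi / (3 * m)) :
    Tendsto z atTop (nhds p) := by
  set c : ℂ := Complex.exp ((((θ : ℂ) - (Real.pi : ℂ)) / ((m : ℂ) - 1)) * Complex.I) with hc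
  have hc0 : c ≠ 0 := Complex.exp_ne_zero _
  have hcm : Complex.exp ((θ : ℂ) * Complex.I) = -c ^ (m - 1) := by
    have hm1 : (m : ℂ) - 1 ≠ 0 := by
      rw [sub_ne_zero]
      exact_mod_cast (by omega : m ≠ 1)
    rw [hc, ← Complex.exp_nat_mul]
    have h1 : ((m - 1 : ℕ) : ℂ) * ((((θ : ℂ) - (Real.pi : ℂ)) / ((m : ℂ) - 1)) * Complex.I)
        = (θ : ℂ) * Complex.I - Real.pi * Complex.I := by
      rw [Nat.cast_sub (by omega)]
      push_cast
      field_simp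
    rw [h1, Complex.exp_sub, Complex.exp_pi_mul_I]
    ring
  set S : ℝ → ℂ := fun t => ∑ i ∈ Finset.range m, (c * z t) ^ i * (c * p) ^ (m - 1 - i) with hS
  have hSre : ∀ t, 0 ≤ t → (1/2 : ℝ) * (‖c * z t - c * p‖ / 2) ^ (m - 1) ≤ (S t).re :=
    fun t ht => aux_sum m hm _ _ (hsector t ht) hpsector
  have hw : ∀ t, 0 ≤ t → HasDerivAt (fun s => c * z s - c * p)
      (-((c * z t - c * p) * S t)) t := by
    intro t ht
    have h := ((hderiv t ht).const_mul c).sub_const (c * p)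
    refine h.congr_deriv (Eq.symm ?_)
    rw [hS, mul_comm (c * z t - c * p)]
    simp only
    rw [Commute.geom_sum₂_mul (Commute.all _ _), hcm, ← hpε, mul_pow, mul_pow]
    obtain ⟨k, rfl⟩ : ∃ k, m = k + 1 := ⟨m - 1, by omega⟩
    simp only [Nat.add_sub_cancel]
    ring
  have hinner : ∀ t, 2 * inner ℝ (c * z t - c * p) (-((c * z t - c * p) * S t))
      = -2 * ‖c * z t - c * p‖ ^ 2 * (S t).re := by
    intro t
    rw [Complex.inner, ← Complex.normSq_eq_norm_sq, Complex.normSq_apply]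
    simp only [Complex.mul_re, Complex.mul_im, Complex.neg_re, Complex.neg_im, Complex.conj_re,
      Complex.conj_im]
    ring
  have hlim : Tendsto (fun t => ‖c * z t - c * p‖ ^ 2) atTop (nhds 0) := by
    apply aux_ode _ (fun t => -2 * ‖c * z t - c * p‖ ^ 2 * (S t).re)
    · intro t ht
      rw [← hinner t]
      exact (hw t ht).norm_sq
    · intro t; positivity
    · intro t ht
      have h1 := hSre t ht
      have h2 : 0 ≤ (S t).re := le_trans (by positivity) h1
      have h3 := mul_nonneg (sq_nonneg ‖c * z t - c * p‖) h2
      linarith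
    · intro δ hδ
      refine ⟨δ * (Real.sqrt δ / 2) ^ (m - 1), by positivity, fun t ht hle => ?_⟩
      have h1 := hSre t ht
      have h4 : Real.sqrt δ ≤ ‖c * z t - c * p‖ := Real.sqrt_le_iff.2 ⟨norm_nonneg _, hle⟩
      have h5 : (1/2 : ℝ) * (Real.sqrt δ / 2) ^ (m - 1) ≤ (S t).re := by
        refine le_trans ?_ h1
        gcongr
      have h6 : δ * ((1/2 : ℝ) * (Real.sqrt δ / 2) ^ (m - 1)) ≤
          ‖c * z t - c * p‖ ^ 2 * (S t).re := by
        gcongr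
      linarith
  have hlim2 : Tendsto (fun t => ‖c * z t - c * p‖) atTop (nhds 0) := by
    have := hlim.sqrt
    simpa [Real.sqrt_sq (norm_nonneg _)] using this
  have hlim3 : Tendsto (fun t => c⁻¹ * (c * z t - c * p) + p) atTop (nhds (c⁻¹ * 0 + p)) :=
    ((tendsto_zero_iff_norm_tendsto_zero.2 hlim2).const_mul _).add_const _
  have heq : (fun t => c⁻¹ * (c * z t - c * p) + p) = z := by
    funext t
    field_simp
    ring
  rw [heq, mul_zero, zero_add] at hlim3
  exact hlim3
end

section
/- Let m ≥ 1 be an integer and α a real number with 0 ≤ α and (m−1)·α ≤ π/2. Let w and q be complex numbers with |arg w| ≤ α and |arg q| ≤ α. Then Re(∑_{l=0}^{m−1} w^{m−1−l}·q^{l}) ≥ (max(|w|, |q|))^{m−1}·cos((m−1)·α). -/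
open Complex

lemma re_term_eq (w q : ℂ) (a b : ℕ) :
    (w ^ a * q ^ b).re = ‖w‖ ^ a * ‖q‖ ^ b * Real.cos (a * w.arg + b * q.arg) := by
  have h : w ^ a * q ^ b = ((‖w‖ ^ a * ‖q‖ ^ b : ℝ) : ℂ) *
      Complex.exp (((a * w.arg + b * q.arg : ℝ) : ℂ) * I) := by
    conv_lhs => rw [← Complex.norm_mul_exp_arg_mul_I w, ← Complex.norm_mul_exp_arg_mul_I q]
    rw [mul_pow, mul_pow, ← Complex.exp_nat_mul, ← Complex.exp_nat_mul]
    push_cast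
    rw [add_mul, Complex.exp_add]
    ring_nf
  rw [h, Complex.re_ofReal_mul, Complex.exp_ofReal_mul_I_re]

/-- Let `m ≥ 1` and `0 ≤ α` with `(m−1)·α ≤ π/2`.  If `w, q ∈ ℂ`
satisfy `|arg w| ≤ α` and `|arg q| ≤ α`, then
`Re(∑_{l=0}^{m−1} w^{m−1−l}·q^l) ≥ (max(|w|,|q|))^{m−1}·cos((m−1)·α)`. -/
theorem re_geom_sum_ge
    (m : ℕ) (hm : 1 ≤ m) (α : ℝ) (hα0 : 0 ≤ α)
    (hα : ((m : ℝ) - 1) * α ≤ Real.pi / 2)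
    (w q : ℂ) (hw : |w.arg| ≤ α) (hq : |q.arg| ≤ α) :
    (max ‖w‖ ‖q‖) ^ (m - 1) *
        Real.cos (((m : ℝ) - 1) * α) ≤
      (∑ l ∈ Finset.range m, w ^ (m - 1 - l) * q ^ l).re := by
  obtain ⟨n, rfl⟩ : ∃ n, m = n + 1 := ⟨m - 1, by omega⟩
  have e : ((n + 1 : ℕ) : ℝ) - 1 = n := by push_cast; ring
  rw [e] at hα ⊢
  simp only [Nat.add_sub_cancel]
  have hn : 0 ≤ (n : ℝ) * α := by positivity
  have hc : 0 ≤ Real.cos (n * α) :=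
    Real.cos_nonneg_of_neg_pi_div_two_le_of_le (by linarith [Real.pi_pos]) hα
  have key : ∀ l ∈ Finset.range (n + 1),
      ‖w‖ ^ (n - l) * ‖q‖ ^ l * Real.cos (n * α) ≤ (w ^ (n - l) * q ^ l).re := by
    intro l hl
    have hl' : l ≤ n := by simpa [Nat.lt_succ_iff] using hl
    rw [re_term_eq]
    apply mul_le_mul_of_nonneg_left _ (by positivity)
    rw [← Real.cos_abs (_ + _)]
    apply Real.cos_le_cos_of_nonneg_of_le_pi (abs_nonneg _) (by linarith [Real.pi_pos])
    calc |((n - l : ℕ) : ℝ) * w.arg + l * q.arg|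
        ≤ |((n - l : ℕ) : ℝ) * w.arg| + |l * q.arg| := abs_add_le _ _
      _ = ((n - l : ℕ) : ℝ) * |w.arg| + l * |q.arg| := by
          rw [abs_mul, abs_mul, Nat.abs_cast, Nat.abs_cast]
      _ ≤ ((n - l : ℕ) : ℝ) * α + l * α := by gcongr
      _ = n * α := by rw [Nat.cast_sub hl']; ring
  have pos : ∀ l ∈ Finset.range (n + 1), 0 ≤ (w ^ (n - l) * q ^ l).re := fun l hl =>
    le_trans (by positivity) (key l hl)
  rw [Complex.re_sum]
  rcases le_total ‖w‖ ‖q‖ with h | h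
  · rw [max_eq_right h]
    have h1 := Finset.single_le_sum pos (Finset.self_mem_range_succ n)
    have h2 := key n (Finset.self_mem_range_succ n)
    simp only [Nat.sub_self, pow_zero, one_mul] at h1 h2
    exact h2.trans h1
  · rw [max_eq_left h]
    have h0 : 0 ∈ Finset.range (n + 1) := by simp
    have h1 := Finset.single_le_sum pos h0
    have h2 := key 0 h0
    simp only [Nat.sub_zero, pow_zero, mul_one] at h1 h2
    exact h2.trans h1
end
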